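/- Fix α ∈ (0,1). For n ≥ 2 and integers k with ⌈n/2⌉ ≤ k ≤ n−1, let q_n(k,n−k) = (1 + 1_{k≠n/2})·[Γ(k−α)Γ(n−k−α)/(Γ(n−α)Γ(1−α))]·[(α/2)·C(n,k) + (1−2α)·C(n−2,k−1)], the splitting probabilities of Ford's α-model. Then for every continuous f : [1/2,1] → ℝ, n^α·Σ_{k=⌈n/2⌉}^{n−1} q_n(k,n−k)·(1−k/n)·f(k/n) → ∫_{1/2}^{1} (1−x)·f(x)·(1/Γ(1−α))·[α·(x(1−x))^{−α−1} + (2−4α)·(x(1−x))^{−α}] dx as n → ∞. That is, (q_n^{Ford,α}) satisfies Hypothesis (H) with γ = α and ν = ν_{Ford,α}, the binary measure on 𝒮↓ supported on sequences (x,1−x,0,0,…) with the displayed density in x ∈ [1/2,1]. -/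

import Mathlib

open MeasureTheory Filter Real Set

/-- The splitting probabilities of Ford's α-model:
`q_n(k,n−k) = (1 + 1_{k≠n/2})·[Γ(k−α)Γ(n−k−α)/(Γ(n−α)Γ(1−α))]·[(α/2)·C(n,k) + (1−2α)·C(n−2,k−1)]`. -/
noncomputable def fordQ (α : ℝ) (n k : ℕ) : ℝ :=
  (if 2 * k = n then (1 : ℝ) else 2) *
    (Real.Gamma ((k : ℝ) - α) * Real.Gamma ((n : ℝ) - (k : ℝ) - α) /
      (Real.Gamma ((n : ℝ) - α) * Real.Gamma (1 - α))) *
    ((α / 2) * (n.choose k : ℝ) + (1 - 2 * α) * ((n - 2).choose (k - 1) : ℝ))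

/-!
By Euler's limit formula, `Γ(m - α) / m!` is asymptotic to `m ^ (-1 - α)`. Since
`C(n - 2, k - 1) = C(n, k) · k(n - k) / (n(n - 1))`, the splitting probability `q_n(k, n - k)` is
therefore `n ^ (-1 - α) · (y(1 - y)) ^ (-1 - α)`, `y = k / n`, times a factor that is bounded
uniformly in `k` and `n` and converges to `(α + (2 - 4α) x(1 - x)) / Γ(1 - α)` when
`k / n → x ≠ 1/2`. Together with the weight `1 - y` this makes the rescaled sum a Riemann sum for
the limiting integral. Each sample point `⌊nx⌋ / n` lies to the left of `x`, so the singular weight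
`(1 - y) ^ (-α)` at the sample point is dominated by an integrable power of `1 - x`, and dominated
convergence applies.
-/

open scoped Topology

section GammaAsymptotics

theorem prod_range_add_mul_Gamma {s : ℝ} (hs : ∀ m : ℕ, s ≠ -m) (n : ℕ) :
    (∏ j ∈ Finset.range n, (s + j)) * Gamma s = Gamma (s + n) := by
  induction n with
  | zero => simp
  | succ n ih =>
    have hsn : s + n ≠ 0 := fun h => hs n (eq_neg_of_add_eq_zero_left h)
    rw [Finset.prod_range_succ, mul_right_comm, ih, mul_comm, ← Gamma_add_one hsn, Nat.cast_succ,
      add_assoc]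

/-- The ratio of `Γ(n + s)` to its asymptotic equivalent `n! n ^ (s - 1)`. -/
noncomputable def gammaRatio (s : ℝ) (n : ℕ) : ℝ :=
  Gamma (n + s) * (n : ℝ) ^ (1 - s) / n.factorial

theorem gammaRatio_add_one {s : ℝ} (hs : ∀ m : ℕ, s ≠ -m) (n : ℕ) :
    gammaRatio (s + 1) n = Gamma s / GammaSeq s n := by
  have hGamma := prod_range_add_mul_Gamma hs (n + 1)
  rw [Nat.cast_succ, add_left_comm] at hGamma
  rw [gammaRatio, GammaSeq, ← hGamma, sub_add_cancel_right, rpow_neg n.cast_nonneg]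
  simp only [div_eq_mul_inv, mul_inv, inv_inv]
  ring

theorem gammaRatio_eq_gammaRatio_add_one_mul {s : ℝ} {n : ℕ} (hn : 0 < n) (hs : (n : ℝ) + s ≠ 0) :
    gammaRatio s n = gammaRatio (s + 1) n * (n / (n + s)) := by
  have hpow : (n : ℝ) ^ (1 - s) = n ^ (1 - (s + 1)) * n := by
    rw [← rpow_add_one (by positivity)]
    ring_nf
  rw [gammaRatio, gammaRatio, ← add_assoc, Gamma_add_one hs, hpow]
  field_simp

theorem tendsto_gammaRatio (s : ℝ) : Tendsto (gammaRatio s) atTop (𝓝 1) := by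
  obtain ⟨m, hm⟩ := exists_nat_gt (1 - s)
  induction m generalizing s with
  | zero =>
    have hpole (j : ℕ) : s - 1 ≠ -j := by
      have := j.cast_nonneg (α := ℝ)
      push_cast at hm
      linarith
    have hGamma := Gamma_ne_zero hpole
    have hlim :=
      (tendsto_const_nhds (x := Gamma (s - 1))).div (GammaSeq_tendsto_Gamma (s - 1)) hGamma
    rw [div_self hGamma] at hlim
    exact hlim.congr fun n => by
      rw [Pi.div_apply, ← gammaRatio_add_one hpole, sub_add_cancel]
  | succ m ih =>
    have hlim := (ih (s + 1) (by push_cast at hm; linarith)).mul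
      (tendsto_natCast_div_add_atTop s)
    rw [one_mul] at hlim
    refine hlim.congr' ?_
    filter_upwards [eventually_gt_atTop 0,
      tendsto_natCast_atTop_atTop.eventually_gt_atTop (-s)] with n hn hns
    exact (gammaRatio_eq_gammaRatio_add_one_mul hn (by linarith)).symm

end GammaAsymptotics

section RiemannSums

theorem floor_mul_natCast_lt {x : ℝ} (hx : x < 1) {n : ℕ} (hn : n ≠ 0) : ⌊x * n⌋₊ < n :=
  (Nat.floor_lt' hn).2 (mul_lt_of_lt_one_left (by positivity) hx)

theorem floor_mul_natCast_div_le {x : ℝ} (hx : 0 ≤ x) (n : ℕ) : (⌊x * n⌋₊ : ℝ) / n ≤ x :=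
  div_le_of_le_mul₀ n.cast_nonneg hx (Nat.floor_le (by positivity))

theorem tendsto_floor_mul_natCast_div {x : ℝ} (hx : 0 ≤ x) :
    Tendsto (fun n : ℕ => (⌊x * n⌋₊ : ℝ) / n) atTop (𝓝 x) :=
  (tendsto_nat_floor_mul_div_atTop hx).comp tendsto_natCast_atTop_atTop

theorem integrableOn_one_sub_rpow {p : ℝ} (hp : -1 < p) :
    IntegrableOn (fun x : ℝ => (1 - x) ^ p) (Ioo 0 1) := by
  have h := (intervalIntegral.intervalIntegrable_rpow' hp (a := 0) (b := 1)).comp_sub_left 1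
  rw [sub_zero, sub_self] at h
  exact (intervalIntegrable_iff_integrableOn_Ioo_of_le zero_le_one).1 h.symm

theorem one_sub_rpow_neg_le {x y : ℝ} (β : ℝ) (hy : 0 ≤ y) (hyx : y ≤ x) (hx : x < 1) :
    (1 - y) ^ (-β) ≤ (1 - x) ^ (-max β 0) :=
  calc
    (1 - y) ^ (-β) ≤ (1 - y) ^ (-max β 0) :=
      rpow_le_rpow_of_exponent_ge (by linarith) (by linarith) (neg_le_neg (le_max_left β 0))
    _ ≤ (1 - x) ^ (-max β 0) :=
      rpow_le_rpow_of_nonpos (by linarith) (by linarith) (neg_nonpos.2 (le_max_right β 0))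

variable {E : Type*} [NormedAddCommGroup E] [NormedSpace ℝ E] [CompleteSpace E]

theorem intervalIntegral_comp_floor (g : ℕ → E) (n : ℕ) :
    ∫ x in (0 : ℝ)..n, g ⌊x⌋₊ = ∑ k ∈ Finset.range n, g k := by
  have hconst (k : ℕ) :
      (fun _ : ℝ => g k) =ᵐ[volume.restrict (uIoc (k : ℝ) (k + 1 : ℕ))] fun x => g ⌊x⌋₊ := by
    rw [uIoc_of_le (by simp), ← restrict_Ioo_eq_restrict_Ioc]
    filter_upwards [ae_restrict_mem measurableSet_Ioo] with x hx
    rw [Nat.floor_eq_on_Ico k x ⟨hx.1.le, by exact_mod_cast hx.2⟩]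
  have hint (k : ℕ) : IntervalIntegrable (fun x : ℝ => g ⌊x⌋₊) volume k (k + 1 : ℕ) :=
    intervalIntegrable_const.congr_ae (hconst k)
  have hsum := intervalIntegral.sum_integral_adjacent_intervals (a := fun k : ℕ => (k : ℝ))
    (n := n) fun k _ => hint k
  rw [Nat.cast_zero] at hsum
  rw [← hsum]
  refine Finset.sum_congr rfl fun k _ => ?_
  rw [← intervalIntegral.integral_congr_ae_restrict (hconst k)]
  simp

theorem setIntegral_comp_floor_mul (g : ℕ → E) {n : ℕ} (hn : n ≠ 0) :
    ∫ x in Ioo (0 : ℝ) 1, g ⌊x * n⌋₊ = (n : ℝ)⁻¹ • ∑ k ∈ Finset.range n, g k := by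
  rw [← integral_Ioc_eq_integral_Ioo, ← intervalIntegral.integral_of_le zero_le_one,
    intervalIntegral.integral_comp_mul_right (fun x => g ⌊x⌋₊) (Nat.cast_ne_zero.2 hn), zero_mul,
    one_mul, intervalIntegral_comp_floor]

theorem tendsto_inv_smul_sum_of_dominated {G : ℕ → ℕ → E} {φ : ℝ → E} {bound : ℝ → ℝ}
    (hbound : IntegrableOn bound (Ioo 0 1))
    (hG : ∀ n ≠ 0, ∀ x ∈ Ioo (0 : ℝ) 1, ‖G n ⌊x * n⌋₊‖ ≤ bound x)
    (hlim : ∀ᵐ x : ℝ ∂volume.restrict (Ioo (0 : ℝ) 1),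
      Tendsto (fun n : ℕ => G n ⌊x * n⌋₊) atTop (𝓝 (φ x))) :
    Tendsto (fun n : ℕ => (n : ℝ)⁻¹ • ∑ k ∈ Finset.range n, G n k) atTop
      (𝓝 (∫ x in Ioo (0 : ℝ) 1, φ x)) := by
  have hmeas (n : ℕ) : StronglyMeasurable fun x : ℝ => G n ⌊x * n⌋₊ :=
    StronglyMeasurable.of_discrete.comp_measurable
      (Nat.measurable_floor.comp (measurable_mul_const (n : ℝ)))
  have hint := tendsto_integral_filter_of_dominated_convergence (l := atTop) bound
    (Eventually.of_forall fun n => (hmeas n).aestronglyMeasurable)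
    (by
      filter_upwards [eventually_ne_atTop 0] with n hn
      filter_upwards [ae_restrict_mem measurableSet_Ioo] with x hx using hG n hn x hx)
    hbound hlim
  refine hint.congr' ?_
  filter_upwards [eventually_ne_atTop 0] with n hn using setIntegral_comp_floor_mul (G n) hn

theorem tendsto_inv_smul_sum_one_sub_rpow_smul {β C : ℝ} (hβ : β < 1) {u : ℕ → ℕ → E}
    {φ : ℝ → E} (hu : ∀ n, ∀ k < n, ‖u n k‖ ≤ C)
    (hlim : ∀ᵐ x : ℝ ∂volume.restrict (Ioo (0 : ℝ) 1),
      Tendsto (fun n : ℕ => u n ⌊x * n⌋₊) atTop (𝓝 (φ x))) :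
    Tendsto
      (fun n : ℕ => (n : ℝ)⁻¹ • ∑ k ∈ Finset.range n, (1 - (k : ℝ) / n) ^ (-β) • u n k) atTop
      (𝓝 (∫ x in Ioo (0 : ℝ) 1, (1 - x) ^ (-β) • φ x)) := by
  have hexp : -1 < -max β 0 := neg_lt_neg (max_lt hβ one_pos)
  refine tendsto_inv_smul_sum_of_dominated ((integrableOn_one_sub_rpow hexp).mul_const C) ?_ ?_
  · intro n hn x hx
    have hle := floor_mul_natCast_div_le hx.1.le n
    have hlt := hle.trans_lt hx.2
    rw [norm_smul, norm_of_nonneg (rpow_nonneg (by linarith) _)]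
    exact mul_le_mul (one_sub_rpow_neg_le β (by positivity) hle hx.2)
      (hu n _ (floor_mul_natCast_lt hx.2 hn)) (norm_nonneg _) (rpow_nonneg (by linarith [hx.2]) _)
  · filter_upwards [hlim, ae_restrict_mem measurableSet_Ioo] with x hx hx01
    have hweight := ((tendsto_floor_mul_natCast_div hx01.1.le).const_sub 1).rpow_const (p := -β)
      (Or.inl (sub_pos.2 hx01.2).ne')
    exact hweight.smul hx

end RiemannSums

section FordWeights

theorem tendsto_atTop_of_tendsto_div {k : ℕ → ℕ} {x : ℝ} (hx : 0 < x)
    (hk : Tendsto (fun n : ℕ => (k n : ℝ) / n) atTop (𝓝 x)) : Tendsto k atTop atTop := by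
  rw [← tendsto_natCast_atTop_iff (R := ℝ)]
  refine (hk.pos_mul_atTop hx tendsto_natCast_atTop_atTop).congr' ?_
  filter_upwards [eventually_ne_atTop 0] with n hn
  exact div_mul_cancel₀ _ (Nat.cast_ne_zero.2 hn)

theorem tendsto_sub_atTop_of_tendsto_div {k : ℕ → ℕ} {x : ℝ} (hx : x < 1)
    (hk : Tendsto (fun n : ℕ => (k n : ℝ) / n) atTop (𝓝 x)) :
    Tendsto (fun n => n - k n) atTop atTop := by
  refine tendsto_atTop_of_tendsto_div (sub_pos.2 hx) ((hk.const_sub 1).congr' ?_)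
  filter_upwards [eventually_gt_atTop 0, hk.eventually_lt_const hx] with n hn hkn
  have hn' : (0 : ℝ) < n := by exact_mod_cast hn
  have hle : k n ≤ n := by exact_mod_cast ((div_lt_one hn').1 hkn).le
  rw [Nat.cast_sub hle, sub_div, div_self hn'.ne']

theorem cast_choose_sub_two_sub_one {K : Type*} [Field K] [CharZero K] {n k : ℕ} (hk : 0 < k)
    (hkn : k < n) :
    ((n - 2).choose (k - 1) : K) = n.choose k * ((k : K) / n * (1 - k / n)) * (n / (n - 1)) := by
  obtain ⟨j, rfl⟩ := Nat.exists_eq_add_one.2 hk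
  obtain ⟨i, rfl⟩ := Nat.exists_eq_add_of_lt hkn
  have hstep₁ : (j + i).choose j * (j + i + 1) = (j + i + 1).choose j * (i + 1) := by
    rw [Nat.choose_mul_succ_eq, Nat.sub_add_comm (Nat.le_add_right j i), Nat.add_sub_cancel_left]
  have hstep₂ : (j + i + 2) * (j + i + 1).choose j = (j + i + 2).choose (j + 1) * (j + 1) :=
    Nat.add_one_mul_choose_eq _ _
  have hj : (j : K) + i + 1 ≠ 0 := by exact_mod_cast Nat.succ_ne_zero (j + i)
  have hj' : (j : K) + i + 2 ≠ 0 := by exact_mod_cast Nat.succ_ne_zero (j + i + 1)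
  have hsub : j + 1 + i + 1 - 2 = j + i := by omega
  have hcast₁ : ((j + i).choose j : K) * (j + i + 1) = (j + i + 1).choose j * (i + 1) := by
    exact_mod_cast hstep₁
  have hcast₂ : (j + i + 2 : K) * (j + i + 1).choose j = (j + i + 2).choose (j + 1) * (j + 1) := by
    exact_mod_cast hstep₂
  rw [hsub, Nat.add_sub_cancel, show j + 1 + i + 1 = j + i + 2 by ring]
  have hmul : ((j + i).choose j : K) * (j + i + 1) * (j + i + 2) =
      (j + i + 2).choose (j + 1) * (j + 1) * (i + 1) := by
    linear_combination (j + i + 2) * hcast₁ + (i + 1) * hcast₂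
  have hpred : ((j + i + 2 : ℕ) : K) - 1 = j + i + 1 := by
    push_cast
    ring
  have hcompl : (1 : K) - (j + 1 : ℕ) / (j + i + 2 : ℕ) = (i + 1) / (j + i + 2) := by
    push_cast
    field_simp
    ring
  rw [hcompl, hpred]
  push_cast
  field_simp
  linear_combination hmul

theorem div_mul_one_sub_div_mul_div_sub_one_mem_Icc {a b : ℝ} (ha : 0 ≤ a) (hab : a + 1 ≤ b) :
    a / b * (1 - a / b) * (b / (b - 1)) ∈ Icc 0 1 := by
  have hb : 0 < b := by linarith
  have hle : a / b ≤ 1 := div_le_one_of_le₀ (by linarith) hb.le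
  have hpred : 0 ≤ a / (b - 1) := div_nonneg ha (by linarith)
  have hpred_le : a / (b - 1) ≤ 1 := div_le_one_of_le₀ (by linarith) (by linarith)
  have hnonneg : 0 ≤ a / b := by positivity
  have heq : a / b * (1 - a / b) * (b / (b - 1)) = a / (b - 1) * (1 - a / b) := by
    field_simp
  rw [heq]
  exact ⟨mul_nonneg hpred (by linarith), mul_le_one₀ hpred_le (by linarith) (by linarith)⟩

variable (α : ℝ)

/-- The splitting probability `fordQ α n k` divided by its order of magnitude
`n ^ (-1 - α) * (y * (1 - y)) ^ (-1 - α)`, where `y = k / n`. -/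
noncomputable def scaledFordQ (n k : ℕ) : ℝ :=
  ((k : ℝ) / n * (1 - k / n)) ^ (1 + α) * ((n : ℝ) ^ (1 + α) * fordQ α n k)

theorem scaledFordQ_eq {n k : ℕ} (hk : 0 < k) (hkn : k < n) :
    scaledFordQ α n k =
      (if 2 * k = n then 1 else 2) *
        (gammaRatio (-α) k * gammaRatio (-α) (n - k) * (gammaRatio (-α) n)⁻¹) *
        ((α / 2 + (1 - 2 * α) * ((k : ℝ) / n * (1 - k / n)) * (n / (n - 1))) / Gamma (1 - α)) := by
  rw [scaledFordQ, fordQ, cast_choose_sub_two_sub_one hk hkn]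
  obtain ⟨m, rfl⟩ := Nat.exists_eq_add_of_le hkn.le
  have hm0 : (0 : ℝ) < m := by exact_mod_cast (by omega : 0 < m)
  have hchoose : ((k + m).choose k : ℝ) = (k + m).factorial / (k.factorial * m.factorial) := by
    rw [Nat.cast_add_choose]
  have hfrac : (1 : ℝ) - k / (k + m : ℕ) = m / (k + m : ℕ) := by
    push_cast
    field_simp
    ring
  have hpow : ((k : ℝ) / (k + m : ℕ) * (m / (k + m : ℕ))) ^ (1 + α) =
      (k : ℝ) ^ (1 + α) * m ^ (1 + α) * (((k + m : ℕ) : ℝ) ^ (1 + α))⁻¹ ^ 2 := by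
    rw [mul_rpow (by positivity) (by positivity), div_rpow (by positivity) (by positivity),
      div_rpow (by positivity) (by positivity)]
    ring
  have hpow0 : ((k + m : ℕ) : ℝ) ^ (1 + α) ≠ 0 := by positivity
  have hfact : ((k + m).factorial : ℝ) ≠ 0 := by positivity
  rw [hchoose, hfrac, hpow]
  simp only [gammaRatio, Nat.add_sub_cancel_left, sub_neg_eq_add, ← sub_eq_add_neg]
  rw [show ((k + m : ℕ) : ℝ) - k = m by push_cast; ring]
  field_simp

theorem exists_abs_scaledFordQ_le :
    ∃ C, ∀ n k : ℕ, 0 < k → k < n → |scaledFordQ α n k| ≤ C := by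
  have hlim := tendsto_gammaRatio (-α)
  obtain ⟨B, hB⟩ := (Metric.isBounded_range_of_tendsto _ hlim).exists_norm_le
  obtain ⟨D, hD⟩ := (Metric.isBounded_range_of_tendsto _ (hlim.inv₀ one_ne_zero)).exists_norm_le
  simp only [forall_mem_range, norm_eq_abs] at hB hD
  have hB0 : 0 ≤ B := (abs_nonneg _).trans (hB 0)
  refine ⟨2 * (B * B * D) * ((|α / 2| + |1 - 2 * α|) / |Gamma (1 - α)|), fun n k hk hkn => ?_⟩
  have hmult : |if 2 * k = n then (1 : ℝ) else 2| ≤ 2 := by split_ifs <;> norm_num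
  obtain ⟨hfrac0, hfrac1⟩ := div_mul_one_sub_div_mul_div_sub_one_mem_Icc
    (k.cast_nonneg (α := ℝ)) (b := n) (by exact_mod_cast hkn)
  have hbracket : |α / 2 + (1 - 2 * α) * ((k : ℝ) / n * (1 - k / n)) * (n / (n - 1))| ≤
      |α / 2| + |1 - 2 * α| := by
    rw [mul_assoc (1 - 2 * α)]
    refine (abs_add_le _ _).trans (add_le_add_right ?_ _)
    rw [abs_mul, abs_of_nonneg hfrac0]
    exact mul_le_of_le_one_right (abs_nonneg _) hfrac1
  rw [scaledFordQ_eq α hk hkn, abs_mul, abs_mul, abs_mul, abs_mul, abs_div]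
  have hD0 : 0 ≤ D := (abs_nonneg _).trans (hD 0)
  gcongr
  exacts [hB k, hB (n - k), hD n]

theorem tendsto_scaledFordQ {k : ℕ → ℕ} {x : ℝ} (hx : x ∈ Ioo (0 : ℝ) 1) (hx2 : x ≠ 1 / 2)
    (hk : Tendsto (fun n : ℕ => (k n : ℝ) / n) atTop (𝓝 x)) :
    Tendsto (fun n : ℕ => scaledFordQ α n (k n)) atTop
      (𝓝 ((α + (2 - 4 * α) * (x * (1 - x))) / Gamma (1 - α))) := by
  have hkTop := tendsto_atTop_of_tendsto_div hx.1 hk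
  have hsubTop := tendsto_sub_atTop_of_tendsto_div hx.2 hk
  have hGamma := tendsto_gammaRatio (-α)
  have hratio : Tendsto (fun n : ℕ => (n : ℝ) / (n - 1)) atTop (𝓝 1) := by
    simpa only [sub_eq_add_neg] using tendsto_natCast_div_add_atTop (-1 : ℝ)
  have hbracket :=
    ((((hk.mul (hk.const_sub 1)).const_mul (1 - 2 * α)).mul hratio).const_add (α / 2)).div_const
      (Gamma (1 - α))
  have hlim := ((((hGamma.comp hkTop).mul (hGamma.comp hsubTop)).mul
    (hGamma.inv₀ one_ne_zero)).const_mul 2).mul hbracket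
  have hvalue : 2 * (1 * 1 * 1⁻¹) *
      ((α / 2 + (1 - 2 * α) * (x * (1 - x)) * 1) / Gamma (1 - α)) =
      (α + (2 - 4 * α) * (x * (1 - x))) / Gamma (1 - α) := by ring
  rw [hvalue] at hlim
  refine hlim.congr' ?_
  filter_upwards [hkTop.eventually_gt_atTop 0, hsubTop.eventually_gt_atTop 0,
    hk.eventually_ne hx2] with n hkn hsub hne
  have hdiag : 2 * k n ≠ n := by
    contrapose! hne
    have hcast : (2 : ℝ) * k n = n := by exact_mod_cast hne
    rw [← hcast]
    field_simp
  rw [scaledFordQ_eq α hkn (Nat.lt_of_sub_pos hsub), if_neg hdiag]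
  rfl

end FordWeights

section TestFunction

theorem continuousOn_rpow_mul {f : ℝ → ℝ} (p : ℝ) (hf : ContinuousOn f (Icc (1 / 2) 1)) :
    ContinuousOn (fun y => y ^ p * f y) (Icc (1 / 2) 1) :=
  (continuousOn_id.rpow_const fun y hy => Or.inl (by dsimp; linarith [hy.1])).mul hf

variable (α : ℝ)

/-- The test function `f` on `[1/2, 1]`, extended by zero, times `y ^ (-1 - α)`: the part of the
limiting integrand that is bounded but depends on `f`. -/
noncomputable def truncatedTest (f : ℝ → ℝ) : ℝ → ℝ :=
  (Icc (1 / 2) 1).indicator fun y => y ^ (-1 - α) * f y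

theorem exists_abs_truncatedTest_le {f : ℝ → ℝ} (hf : ContinuousOn f (Icc (1 / 2) 1)) :
    ∃ C, ∀ y, |truncatedTest α f y| ≤ C := by
  obtain ⟨C, hC⟩ := isCompact_Icc.exists_bound_of_continuousOn (continuousOn_rpow_mul (-1 - α) hf)
  have hC0 : 0 ≤ C := (norm_nonneg _).trans (hC 1 (by norm_num))
  refine ⟨C, fun y => ?_⟩
  by_cases hy : y ∈ Icc (1 / 2 : ℝ) 1
  · rw [truncatedTest, indicator_of_mem hy]
    exact hC y hy
  · rw [truncatedTest, indicator_of_notMem hy, abs_zero]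
    exact hC0

theorem continuousAt_truncatedTest {f : ℝ → ℝ} {x : ℝ} (hf : ContinuousOn f (Icc (1 / 2) 1))
    (hx : x ≠ 1 / 2) (hx1 : x ≠ 1) : ContinuousAt (truncatedTest α f) x := by
  refine ContinuousOn.continuousAt_indicator
    ((continuousOn_rpow_mul (-1 - α) hf).mono interior_subset) ?_
  rw [frontier_Icc (by norm_num)]
  exact not_or.2 ⟨hx, hx1⟩

theorem exists_abs_truncatedTest_mul_scaledFordQ_le {f : ℝ → ℝ}
    (hf : ContinuousOn f (Icc (1 / 2) 1)) :
    ∃ C, ∀ n : ℕ, ∀ k < n, |truncatedTest α f ((k : ℝ) / n) * scaledFordQ α n k| ≤ C := by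
  obtain ⟨A, hA⟩ := exists_abs_truncatedTest_le α hf
  obtain ⟨B, hB⟩ := exists_abs_scaledFordQ_le α
  have hA0 : 0 ≤ A := (abs_nonneg _).trans (hA 0)
  refine ⟨max 0 (A * B), fun n k hkn => ?_⟩
  obtain rfl | hk := k.eq_zero_or_pos
  · have hzero : truncatedTest α f 0 = 0 := indicator_of_notMem (by norm_num) _
    rw [Nat.cast_zero, zero_div, hzero, zero_mul, abs_zero]
    exact le_max_left _ _
  · rw [abs_mul]
    exact (mul_le_mul (hA _) (hB n k hk hkn) (abs_nonneg _) hA0).trans (le_max_right _ _)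

theorem ae_tendsto_truncatedTest_mul_scaledFordQ {f : ℝ → ℝ}
    (hf : ContinuousOn f (Icc (1 / 2) 1)) :
    ∀ᵐ x : ℝ ∂volume.restrict (Ioo (0 : ℝ) 1),
      Tendsto (fun n : ℕ => truncatedTest α f ((⌊x * n⌋₊ : ℝ) / n) * scaledFordQ α n ⌊x * n⌋₊) atTop
        (𝓝 (truncatedTest α f x * ((α + (2 - 4 * α) * (x * (1 - x))) / Gamma (1 - α)))) := by
  filter_upwards [ae_restrict_mem measurableSet_Ioo,
    Measure.ae_ne (volume.restrict (Ioo 0 1)) (1 / 2)] with x hx hx2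
  have hfloor := tendsto_floor_mul_natCast_div hx.1.le
  exact ((continuousAt_truncatedTest α hf hx2 hx.2.ne).tendsto.comp hfloor).mul
    (tendsto_scaledFordQ α hx hx2 hfloor)

theorem mul_fordQ_eq_truncatedTest_mul_scaledFordQ {n k : ℕ} (f : ℝ → ℝ) (hk : n ≤ 2 * k)
    (hkn : k < n) :
    (n : ℝ) ^ α * (fordQ α n k * (1 - (k : ℝ) / n) * f (k / n)) =
      (n : ℝ)⁻¹ * ((1 - (k : ℝ) / n) ^ (-α) *
        (truncatedTest α f (k / n) * scaledFordQ α n k)) := by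
  have hn0 : (0 : ℝ) < n := by exact_mod_cast (Nat.zero_lt_of_lt hkn)
  have hk' : (n : ℝ) ≤ 2 * k := by exact_mod_cast hk
  have hy_half : (1 / 2 : ℝ) ≤ k / n := by
    rw [le_div_iff₀ hn0]
    linarith
  have hy_one : (k : ℝ) / n < 1 := by
    rw [div_lt_one hn0]
    exact_mod_cast hkn
  rw [truncatedTest, indicator_of_mem (mem_Icc.2 ⟨hy_half, hy_one.le⟩), scaledFordQ]
  generalize (k : ℝ) / n = y at *
  have hy0 : 0 < y := by linarith
  have hy1 : 0 < 1 - y := sub_pos.2 hy_one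
  rw [mul_rpow hy0.le hy1.le, rpow_add hy1, rpow_add hn0, rpow_neg hy1.le, ← neg_add',
    rpow_neg hy0.le]
  simp only [rpow_one]
  field_simp

theorem rpow_mul_sum_fordQ_eq (f : ℝ → ℝ) {n : ℕ} (hn : n ≠ 0) :
    (n : ℝ) ^ α * ∑ k ∈ Finset.Icc ((n + 1) / 2) (n - 1),
        fordQ α n k * (1 - (k : ℝ) / n) * f ((k : ℝ) / n) =
      (n : ℝ)⁻¹ • ∑ k ∈ Finset.range n, (1 - (k : ℝ) / n) ^ (-α) •
        (truncatedTest α f (k / n) * scaledFordQ α n k) := by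
  simp only [smul_eq_mul, Finset.mul_sum]
  have hIcc : Finset.Icc ((n + 1) / 2) (n - 1) ⊆ Finset.range n := fun k hk => by
    simp only [Finset.mem_Icc, Finset.mem_range] at hk ⊢
    omega
  refine Finset.sum_subset_zero_on_sdiff hIcc (fun k hk => ?_) fun k hk => ?_
  · have hhalf : (k : ℝ) / n ∉ Icc (1 / 2) 1 := by
      simp only [Finset.mem_sdiff, Finset.mem_range, Finset.mem_Icc] at hk
      have hk2 : (2 * k : ℝ) < n := by exact_mod_cast (by omega : 2 * k < n)
      rw [mem_Icc, not_and_or, not_le, div_lt_iff₀ (by positivity)]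
      exact Or.inl (by linarith)
    rw [truncatedTest, indicator_of_notMem hhalf, zero_mul, mul_zero, mul_zero]
  · rw [Finset.mem_Icc] at hk
    exact mul_fordQ_eq_truncatedTest_mul_scaledFordQ α f (by omega) (by omega)

theorem setIntegral_truncatedTest_eq (f : ℝ → ℝ) :
    ∫ x in Ioo (0 : ℝ) 1, (1 - x) ^ (-α) •
        (truncatedTest α f x * ((α + (2 - 4 * α) * (x * (1 - x))) / Gamma (1 - α))) =
      ∫ x in Icc (1 / 2 : ℝ) 1, (1 - x) * f x * ((1 / Gamma (1 - α)) *
        (α * (x * (1 - x)) ^ (-α - 1) + (2 - 4 * α) * (x * (1 - x)) ^ (-α))) := by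
  have hsub : Ico (1 / 2 : ℝ) 1 ⊆ Ioo 0 1 := fun x hx => ⟨by linarith [hx.1], hx.2⟩
  have hzero (x : ℝ) (hx : x ∈ Ioo (0 : ℝ) 1 \ Ico (1 / 2) 1) : truncatedTest α f x = 0 :=
    indicator_of_notMem (fun hmem => hx.2 ⟨hmem.1, hx.1.2⟩) _
  rw [integral_Icc_eq_integral_Ico,
    setIntegral_eq_of_subset_of_forall_sdiff_eq_zero measurableSet_Ioo hsub fun x hx => by
      rw [hzero x hx, zero_mul, smul_zero]]
  refine setIntegral_congr_fun measurableSet_Ico fun x hx => ?_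
  have hx0 : 0 < x := by linarith [hx.1]
  have hx1 : 0 < 1 - x := sub_pos.2 hx.2
  have hpow : x ^ (-1 - α) * x = x ^ (-α) := by
    rw [← rpow_add_one hx0.ne']
    ring_nf
  rw [truncatedTest, indicator_of_mem (Ico_subset_Icc_self hx), smul_eq_mul,
    rpow_sub_one (mul_pos hx0 hx1).ne', mul_rpow hx0.le hx1.le, ← hpow]
  field_simp

end TestFunction

theorem stmt12_general {α : ℝ} (hα : α < 1) {f : ℝ → ℝ} (hf : ContinuousOn f (Icc (1 / 2) 1)) :
    Tendsto (fun n : ℕ => (n : ℝ) ^ α * ∑ k ∈ Finset.Icc ((n + 1) / 2) (n - 1),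
        fordQ α n k * (1 - (k : ℝ) / n) * f ((k : ℝ) / n)) atTop
      (𝓝 (∫ x in Icc (1 / 2 : ℝ) 1, (1 - x) * f x * ((1 / Gamma (1 - α)) *
        (α * (x * (1 - x)) ^ (-α - 1) + (2 - 4 * α) * (x * (1 - x)) ^ (-α))))) := by
  obtain ⟨C, hC⟩ := exists_abs_truncatedTest_mul_scaledFordQ_le α hf
  have hlim := tendsto_inv_smul_sum_one_sub_rpow_smul
    (u := fun n k => truncatedTest α f ((k : ℝ) / n) * scaledFordQ α n k) hα hC
    (ae_tendsto_truncatedTest_mul_scaledFordQ α hf)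
  rw [setIntegral_truncatedTest_eq] at hlim
  refine hlim.congr' ?_
  filter_upwards [eventually_ne_atTop 0] with n hn using (rpow_mul_sum_fordQ_eq α f hn).symm

/-- for `α ∈ (0,1)`, the splitting probabilities of Ford's α-model satisfy
Hypothesis (H) with `γ = α` and `ν = ν_{Ford,α}`: for every continuous `f : [1/2,1] → ℝ`,
`n^α · Σ_{k=⌈n/2⌉}^{n−1} q_n(k,n−k)(1−k/n) f(k/n)` converges to
`∫_{1/2}^{1} (1−x) f(x) (1/Γ(1−α))[α(x(1−x))^{−α−1} + (2−4α)(x(1−x))^{−α}] dx`. -/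
theorem stmt12 (α : ℝ) (hα0 : 0 < α) (hα1 : α < 1) :
    ∀ f : ℝ → ℝ, ContinuousOn f (Set.Icc (1/2 : ℝ) 1) →
      Tendsto (fun n : ℕ => (n : ℝ) ^ α *
          ∑ k ∈ Finset.Icc ((n + 1) / 2) (n - 1),
            fordQ α n k * (1 - (k : ℝ) / n) * f ((k : ℝ) / n))
        atTop
        (nhds (∫ x in Set.Icc (1/2 : ℝ) 1,
          (1 - x) * f x * ((1 / Real.Gamma (1 - α)) *
            (α * (x * (1 - x)) ^ (-α - 1) + (2 - 4 * α) * (x * (1 - x)) ^ (-α))))) :=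
  fun _ hf => stmt12_general hα1 hf
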